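/- Let E ⊂ ℤ_{>0} be a finite set of strictly positive integers with |E| = L ≥ 1, let b_n ∈ ℂ for n ∈ E, and set P(t) = Σ_{n ∈ E} b_n e^{int}. Then ‖P‖_{L²(S¹)}² ≤ 144 L ‖ρ ∘ P‖_{L²(S¹)}², where the L² norms are taken with respect to the probability Haar measure dσ = dt/(2π) on the circle. -/

import Mathlib

open MeasureTheory

/-- The defect function `ρ(w) = ||1+w| − 1|`. -/
noncomputable def ρ (w : ℂ) : ℝ := |‖1 + w‖ - 1|

/-- Average over the circle with respect to the probability Haar measure `dσ = dt/(2π)`. -/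
noncomputable def circleAvg (f : ℝ → ℝ) : ℝ :=
  (1 / (2 * Real.pi)) * ∫ t in (0 : ℝ)..(2 * Real.pi), f t

/-!
The defect `ρ w` sees `Re w` to first order when `w` is small and `‖w‖` itself when `w` is large,
so it controls `‖P‖²` in both regimes. Write `g = ‖1 + P‖ - 1`, so `ρ(P)² = g²` and
`‖P‖² = g² + 2 g - 2 Re P`; let `N = ‖P‖²_{L²}` and `J = ‖ρ ∘ P‖²_{L²}`.

Since `P` has mean zero, integrating the identity and absorbing `2 g` gives `N ≤ (1 + a) J + 1 / a`
for every `a > 0`. On the other hand `0 ≤ g - Re P ≤ ‖P‖² / 2`, and `∫ P² = 0` makes `(Re P)²` have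
mean `N / 2`; as `‖P‖² ≤ L N` pointwise, this yields `N / 2 ≤ 2 J + L N² / 2`. The second inequality
settles the case `L N ≤ 1 / 2`, the first one with `a = 2 / N` the case `L N > 1 / 2`.
-/

lemma ρ_sq (w : ℂ) : ρ w ^ 2 = (‖1 + w‖ - 1) ^ 2 := sq_abs _

lemma ρ_le_norm (w : ℂ) : ρ w ≤ ‖w‖ := by
  simpa [ρ] using abs_norm_sub_norm_le (1 + w) 1

lemma continuous_ρ : Continuous ρ := by
  unfold ρ
  fun_prop

lemma norm_sq_eq_add_sub_re (w : ℂ) :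
    ‖w‖ ^ 2 = (‖1 + w‖ - 1) ^ 2 + 2 * (‖1 + w‖ - 1) - 2 * w.re := by
  have h : ‖1 + w‖ ^ 2 = 1 + 2 * w.re + ‖w‖ ^ 2 := by
    simp only [Complex.sq_norm, Complex.normSq_add, map_one, one_mul, Complex.conj_re]
    ring
  linear_combination -h

lemma norm_sq_le_ρ_sq_add_sub_re (w : ℂ) {a : ℝ} (ha : 0 < a) :
    ‖w‖ ^ 2 ≤ (1 + a) * ρ w ^ 2 + 1 / a - 2 * w.re := by
  rw [norm_sq_eq_add_sub_re, ρ_sq]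
  set g := ‖1 + w‖ - 1
  have amgm : 0 ≤ a * g ^ 2 + 1 / a - 2 * g := calc
    0 ≤ a * (g - 1 / a) ^ 2 := by positivity
    _ = a * g ^ 2 + 1 / a - 2 * g := by field_simp; ring
  linarith

lemma re_sq_le_ρ_sq_add_norm_sq {w : ℂ} {M : ℝ} (hM : ‖w‖ ^ 2 ≤ M) :
    w.re ^ 2 ≤ 2 * ρ w ^ 2 + M / 2 * ‖w‖ ^ 2 := by
  have hw := norm_sq_eq_add_sub_re w
  have re_le : 1 + w.re ≤ ‖1 + w‖ := by simpa using Complex.re_le_norm (1 + w)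
  rw [ρ_sq]
  set g := ‖1 + w‖ - 1
  have gap_nonneg : 0 ≤ g - w.re := by linarith
  have gap_le : g - w.re ≤ ‖w‖ ^ 2 / 2 := by linarith [sq_nonneg g]
  have gap_sq_le : (g - w.re) ^ 2 ≤ M / 4 * ‖w‖ ^ 2 := calc
    (g - w.re) ^ 2 ≤ (‖w‖ ^ 2 / 2) ^ 2 := by gcongr
    _ = ‖w‖ ^ 2 / 4 * ‖w‖ ^ 2 := by ring
    _ ≤ M / 4 * ‖w‖ ^ 2 := by gcongr
  calc w.re ^ 2 = (g - (g - w.re)) ^ 2 := by ring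
    _ ≤ 2 * g ^ 2 + 2 * (g - w.re) ^ 2 := by linarith [sq_nonneg (g + (g - w.re))]
    _ ≤ 2 * g ^ 2 + M / 2 * ‖w‖ ^ 2 := by linarith

section Integral

variable {Ω : Type*} {mΩ : MeasurableSpace Ω} {μ : Measure Ω} {f : Ω → ℂ}

lemma memLp_ρ_comp {p : ENNReal} (hf : MemLp f p μ) : MemLp (fun ω => ρ (f ω)) p μ :=
  hf.of_le (continuous_ρ.comp_aestronglyMeasurable hf.1) <| .of_forall fun ω => by
    simpa [ρ] using ρ_le_norm (f ω)

lemma integral_norm_sq_le_of_integral_eq_zero [IsProbabilityMeasure μ] (hf : MemLp f 2 μ)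
    (hmean : ∫ ω, f ω ∂μ = 0) {a : ℝ} (ha : 0 < a) :
    ∫ ω, ‖f ω‖ ^ 2 ∂μ ≤ (1 + a) * ∫ ω, ρ (f ω) ^ 2 ∂μ + 1 / a := by
  have int_f : Integrable f μ := hf.integrable one_le_two
  have int_re : Integrable (fun ω => 2 * (f ω).re) μ := int_f.re.const_mul 2
  have int_ρ : Integrable (fun ω => (1 + a) * ρ (f ω) ^ 2) μ :=
    (memLp_ρ_comp hf).integrable_sq.const_mul _
  have int_ρ_add : Integrable (fun ω => (1 + a) * ρ (f ω) ^ 2 + 1 / a) μ :=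
    int_ρ.add (integrable_const _)
  have mean_re : ∫ ω, (f ω).re ∂μ = 0 := by
    simpa [hmean] using integral_re int_f
  calc ∫ ω, ‖f ω‖ ^ 2 ∂μ
      ≤ ∫ ω, (1 + a) * ρ (f ω) ^ 2 + 1 / a - 2 * (f ω).re ∂μ :=
        integral_mono hf.norm.integrable_sq (int_ρ_add.sub int_re)
          fun ω => norm_sq_le_ρ_sq_add_sub_re (f ω) ha
    _ = (1 + a) * ∫ ω, ρ (f ω) ^ 2 ∂μ + 1 / a := by
        rw [integral_sub int_ρ_add int_re, integral_add int_ρ (integrable_const _),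
          integral_const_mul, integral_const_mul, mean_re]
        simp

lemma integral_re_sq_le_of_norm_sq_le (hf : MemLp f 2 μ) {M : ℝ}
    (hM : ∀ᵐ ω ∂μ, ‖f ω‖ ^ 2 ≤ M) :
    ∫ ω, (f ω).re ^ 2 ∂μ ≤ 2 * ∫ ω, ρ (f ω) ^ 2 ∂μ + M / 2 * ∫ ω, ‖f ω‖ ^ 2 ∂μ := by
  have int_ρ : Integrable (fun ω => 2 * ρ (f ω) ^ 2) μ :=
    (memLp_ρ_comp hf).integrable_sq.const_mul 2
  have int_norm : Integrable (fun ω => M / 2 * ‖f ω‖ ^ 2) μ :=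
    hf.norm.integrable_sq.const_mul _
  rw [← integral_const_mul, ← integral_const_mul, ← integral_add int_ρ int_norm]
  refine integral_mono_ae hf.re.integrable_sq (int_ρ.add int_norm) ?_
  filter_upwards [hM] with ω hω using re_sq_le_ρ_sq_add_norm_sq hω

lemma integral_re_sq_eq_of_integral_sq_eq_zero (hf : MemLp f 2 μ) (hsq : ∫ ω, f ω ^ 2 ∂μ = 0) :
    ∫ ω, (f ω).re ^ 2 ∂μ = (∫ ω, ‖f ω‖ ^ 2 ∂μ) / 2 := by
  have int_sq : Integrable (fun ω => f ω ^ 2) μ :=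
    (hf.integrable_mul hf).congr (.of_forall fun ω => (sq (f ω)).symm)
  have integral_re_of_sq : ∫ ω, (f ω ^ 2).re ∂μ = 0 := by
    simpa [hsq] using integral_re int_sq
  have re_sq (w : ℂ) : w.re ^ 2 = (‖w‖ ^ 2 + (w ^ 2).re) / 2 := by
    rw [Complex.sq_norm, Complex.normSq_apply, sq w, Complex.mul_re]
    ring
  simp_rw [re_sq]
  have int_re_sq : Integrable (fun ω => (f ω ^ 2).re) μ := int_sq.re
  rw [integral_div, integral_add hf.norm.integrable_sq int_re_sq, integral_re_of_sq, add_zero]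

theorem integral_norm_sq_le_mul_integral_ρ_sq [IsProbabilityMeasure μ]
    (hf : AEStronglyMeasurable f μ) (hmean : ∫ ω, f ω ∂μ = 0) (hsq : ∫ ω, f ω ^ 2 ∂μ = 0)
    {K : ℝ} (hK : 0 ≤ K) (hsup : ∀ᵐ ω ∂μ, ‖f ω‖ ^ 2 ≤ K * ∫ ω, ‖f ω‖ ^ 2 ∂μ) :
    ∫ ω, ‖f ω‖ ^ 2 ∂μ ≤ 10 * K * ∫ ω, ρ (f ω) ^ 2 ∂μ := by
  have hf2 : MemLp f 2 μ := .of_bound hf _ <| hsup.mono fun ω hω =>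
    (le_abs_self _).trans (Real.abs_le_sqrt hω)
  have far (a : ℝ) (ha : 0 < a) := integral_norm_sq_le_of_integral_eq_zero hf2 hmean ha
  have near := integral_re_sq_le_of_norm_sq_le hf2 hsup
  rw [integral_re_sq_eq_of_integral_sq_eq_zero hf2 hsq] at near
  have N_le : ∫ ω, ‖f ω‖ ^ 2 ∂μ ≤ K * ∫ ω, ‖f ω‖ ^ 2 ∂μ := by
    simpa using integral_mono_ae hf2.norm.integrable_sq (integrable_const _) hsup
  have J_nonneg : 0 ≤ ∫ ω, ρ (f ω) ^ 2 ∂μ := integral_nonneg fun _ => sq_nonneg _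
  have N_nonneg : 0 ≤ ∫ ω, ‖f ω‖ ^ 2 ∂μ := integral_nonneg fun _ => sq_nonneg _
  set N := ∫ ω, ‖f ω‖ ^ 2 ∂μ
  set J := ∫ ω, ρ (f ω) ^ 2 ∂μ
  rcases N_nonneg.eq_or_lt with N_zero | N_pos
  · rw [← N_zero]
    positivity
  have K_ge : 1 ≤ K := le_of_mul_le_mul_right (by simpa using N_le) N_pos
  have J_le : J ≤ K * J := le_mul_of_one_le_left J_nonneg K_ge
  rcases le_total (K * N) (1 / 2) with small | large
  · have : K * N / 2 * N ≤ 1 / 2 / 2 * N := by gcongr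
    linarith
  · have two_div_N_le : 2 / N ≤ 4 * K := by
      rw [div_le_iff₀ N_pos]
      linarith
    have : N ≤ (1 + 4 * K) * J + N / 2 := calc
      N ≤ (1 + 2 / N) * J + 1 / (2 / N) := far _ (by positivity)
      _ ≤ (1 + 4 * K) * J + N / 2 := by rw [one_div_div]; gcongr
    linarith

end Integral

/-- The probability Haar measure `dσ = dt/(2π)` of the circle, carried by the fundamental domain
`(0, 2π]`; integrating against it gives `circleAvg`. -/
noncomputable def circleMeasure : Measure ℝ :=
  ProbabilityTheory.cond volume (Set.Ioc 0 (2 * Real.pi))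

instance : IsProbabilityMeasure circleMeasure :=
  ProbabilityTheory.cond_isProbabilityMeasure_of_finite (by simp [Real.pi_pos])
    measure_Ioc_lt_top.ne

lemma integral_circleMeasure {F : Type*} [NormedAddCommGroup F] [NormedSpace ℝ F] (f : ℝ → F) :
    ∫ t, f t ∂circleMeasure = (1 / (2 * Real.pi)) • ∫ t in (0 : ℝ)..(2 * Real.pi), f t := by
  have := Real.two_pi_pos.le
  simp [circleMeasure, ProbabilityTheory.cond, intervalIntegral.integral_of_le, this,
    ENNReal.toReal_ofReal, Real.pi_pos.le]

lemma circleAvg_eq_integral (f : ℝ → ℝ) : circleAvg f = ∫ t, f t ∂circleMeasure :=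
  (integral_circleMeasure f).symm

lemma circleAvg_nonneg {f : ℝ → ℝ} (hf : 0 ≤ f) : 0 ≤ circleAvg f := by
  rw [circleAvg_eq_integral]
  exact integral_nonneg hf

lemma integrable_circleMeasure_of_continuous {F : Type*} [NormedAddCommGroup F] {f : ℝ → F}
    (hf : Continuous f) : Integrable f circleMeasure :=
  hf.integrableOn_Ioc.smul_measure (by simp [Real.pi_pos])

lemma integral_exp_int_mul_I_circleMeasure (k : ℤ) :
    ∫ t : ℝ, Complex.exp (k * t * Complex.I) ∂circleMeasure = if k = 0 then 1 else 0 := by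
  split_ifs with hk
  · simp [hk]
  have hkI : (k : ℂ) * Complex.I ≠ 0 := by simp [hk]
  have period : Complex.exp (k * Complex.I * (2 * Real.pi : ℝ)) = 1 :=
    Complex.exp_eq_one_iff.mpr ⟨k, by push_cast; ring⟩
  simp_rw [integral_circleMeasure, mul_right_comm]
  rw [integral_exp_mul_complex hkI, period]
  simp

section TrigPoly

variable {ι κ : Type*}

/-- The trigonometric polynomial `∑_{j ∈ s} b_j e^{i k_j t}`. Terms are indexed by an arbitrary type
rather than by their frequencies, so that products of trigonometric polynomials are again of this
form without collecting equal frequencies. -/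
noncomputable def trigPoly (s : Finset ι) (k : ι → ℤ) (b : ι → ℂ) (t : ℝ) : ℂ :=
  ∑ j ∈ s, b j * Complex.exp (k j * t * Complex.I)

lemma continuous_trigPoly (s : Finset ι) (k : ι → ℤ) (b : ι → ℂ) : Continuous (trigPoly s k b) := by
  unfold trigPoly
  fun_prop

lemma trigPoly_mul (s : Finset ι) (k : ι → ℤ) (b : ι → ℂ) (s' : Finset κ) (k' : κ → ℤ)
    (b' : κ → ℂ) (t : ℝ) :
    trigPoly s k b t * trigPoly s' k' b' t =
      trigPoly (s ×ˢ s') (fun p => k p.1 + k' p.2) (fun p => b p.1 * b' p.2) t := by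
  simp only [trigPoly, Finset.sum_mul_sum, ← Finset.sum_product', Int.cast_add, add_mul,
    Complex.exp_add, mul_mul_mul_comm]

lemma conj_trigPoly (s : Finset ι) (k : ι → ℤ) (b : ι → ℂ) (t : ℝ) :
    starRingEnd ℂ (trigPoly s k b t) = trigPoly s (-k) (star b) t := by
  simp [trigPoly, ← Complex.exp_conj]

lemma integral_trigPoly (s : Finset ι) (k : ι → ℤ) (b : ι → ℂ) :
    ∫ t, trigPoly s k b t ∂circleMeasure = ∑ j ∈ s, if k j = 0 then b j else 0 := by
  unfold trigPoly
  rw [integral_finsetSum _ fun j _ => integrable_circleMeasure_of_continuous (by fun_prop)]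
  simp [integral_const_mul, integral_exp_int_mul_I_circleMeasure]

lemma integral_norm_sq_trigPoly {s : Finset ι} {k : ι → ℤ} (hk : Set.InjOn k s) (b : ι → ℂ) :
    ∫ t, ‖trigPoly s k b t‖ ^ 2 ∂circleMeasure = ∑ j ∈ s, ‖b j‖ ^ 2 := by
  classical
  apply Complex.ofReal_injective
  calc ((∫ t, ‖trigPoly s k b t‖ ^ 2 ∂circleMeasure : ℝ) : ℂ)
      = ∫ t, trigPoly (s ×ˢ s) (fun p => k p.1 + (-k) p.2) (fun p => b p.1 * star b p.2) t
          ∂circleMeasure := by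
        simp_rw [← integral_complex_ofReal, Complex.ofReal_pow, ← Complex.mul_conj', conj_trigPoly,
          trigPoly_mul]
    _ = ∑ i ∈ s, ∑ j ∈ s, if i = j then b i * star (b j) else 0 := by
        rw [integral_trigPoly, Finset.sum_product]
        refine Finset.sum_congr rfl fun i hi => Finset.sum_congr rfl fun j hj => ?_
        simp [← sub_eq_add_neg, sub_eq_zero, hk.eq_iff hi hj]
    _ = ((∑ j ∈ s, ‖b j‖ ^ 2 : ℝ) : ℂ) := by
        simp +contextual [Complex.mul_conj']

lemma norm_sq_trigPoly_le (s : Finset ι) (k : ι → ℤ) (b : ι → ℂ) (t : ℝ) :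
    ‖trigPoly s k b t‖ ^ 2 ≤ s.card * ∑ j ∈ s, ‖b j‖ ^ 2 := by
  have norm_exp (n : ℤ) : ‖Complex.exp (n * t * Complex.I)‖ = 1 := by
    exact_mod_cast Complex.norm_exp_ofReal_mul_I (n * t)
  calc ‖trigPoly s k b t‖ ^ 2 ≤ (∑ j ∈ s, ‖b j‖) ^ 2 := by
        gcongr
        simpa [trigPoly, norm_exp] using
          norm_sum_le s fun j => b j * Complex.exp (k j * t * Complex.I)
    _ ≤ s.card * ∑ j ∈ s, ‖b j‖ ^ 2 := sq_sum_le_card_mul_sum_sq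

end TrigPoly

theorem stmt8_general {ι : Type*} {s : Finset ι} {k : ι → ℤ} (hk : Set.InjOn k s)
    (hk_add : ∀ i ∈ s, ∀ j ∈ s, k i + k j ≠ 0) (b : ι → ℂ) :
    circleAvg (fun t => ‖trigPoly s k b t‖ ^ 2)
      ≤ 10 * s.card * circleAvg (fun t => ρ (trigPoly s k b t) ^ 2) := by
  have hmean : ∫ t, trigPoly s k b t ∂circleMeasure = 0 := by
    rw [integral_trigPoly]
    exact Finset.sum_eq_zero fun j hj => if_neg fun h => hk_add j hj j hj (by simp [h])
  have hsq : ∫ t, trigPoly s k b t ^ 2 ∂circleMeasure = 0 := by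
    simp_rw [sq, trigPoly_mul, integral_trigPoly, Finset.sum_product]
    exact Finset.sum_eq_zero fun i hi => Finset.sum_eq_zero fun j hj => if_neg (hk_add i hi j hj)
  simp_rw [circleAvg_eq_integral]
  refine integral_norm_sq_le_mul_integral_ρ_sq (continuous_trigPoly s k b).aestronglyMeasurable
    hmean hsq s.card.cast_nonneg (.of_forall fun t => ?_)
  rw [integral_norm_sq_trigPoly hk]
  exact norm_sq_trigPoly_le s k b t

/-- **Local circle estimate.** If `E ⊂ ℤ_{>0}` is finite with `|E| = L ≥ 1` and
`P(t) = Σ_{n ∈ E} b_n e^{int}`, then `‖P‖²_{L²(S¹)} ≤ 144 L ‖ρ ∘ P‖²_{L²(S¹)}`. -/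
theorem stmt8 (E : Finset ℕ) (hE : ∀ n ∈ E, 1 ≤ n) (hL : 1 ≤ E.card) (b : ℕ → ℂ) :
    circleAvg (fun t => ‖∑ n ∈ E, b n * Complex.exp ((n : ℂ) * (t : ℂ) * Complex.I)‖ ^ 2)
      ≤ 144 * E.card *
        circleAvg (fun t =>
          (ρ (∑ n ∈ E, b n * Complex.exp ((n : ℂ) * (t : ℂ) * Complex.I))) ^ 2) := by
  have h := stmt8_general (s := E) (k := (↑)) Nat.cast_injective.injOn
    (fun m hm n _ => by have := hE m hm; lia) b
  simp only [trigPoly, Int.cast_natCast] at h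
  exact h.trans <| mul_le_mul_of_nonneg_right (by gcongr; norm_num) <|
    circleAvg_nonneg fun _ => sq_nonneg _
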